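/- Let α be a countable ordinal, δ = ω^(α+1), X = [1, δ] with the order topology, G the group of homeomorphisms of X, A_n = [ω^α·(n−1)+1, ω^α·n] for n ≥ 1, π : G → Sym({1,2,…}) the homomorphism determined by π(g)(m) = n iff g(ω^α·m) = ω^α·n, and K* the kernel of π. Suppose h ∈ K*, i ≥ 1, and B, C are bounded clopen subsets of A_i such that h maps A_i \ B onto A_i \ C. Then (P_i(h), Q_i(h)) ∼ (C, B), where P_i(h) = A_i \ h(A_i) and Q_i(h) = A_i \ h⁻¹(A_i). -/

import Mathlib

open Ordinal Topology

noncomputable section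

/-- The ordinal interval `[1, γ]`, i.e. the set of ordinals `β` with `1 ≤ β ≤ γ`, with the
subspace topology induced from the order topology on `Ordinal` (equivalently, its order
topology, since it is order-connected). -/
abbrev OrdIcc (γ : Ordinal) : Type _ := ↥(Set.Icc (1 : Ordinal) γ)

/-- `X = [1, δ]` where `δ = ω^(α+1)`. -/
abbrev Xsp (α : Ordinal) : Type _ := OrdIcc (omega0 ^ (α + 1))

lemma omega_pow_mul_mem (α : Ordinal) (m : ℕ+) :
    omega0 ^ α * ((m : ℕ) : Ordinal) ∈ Set.Icc (1 : Ordinal) (omega0 ^ (α + 1)) := by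
  constructor
  · have h1 : (1 : Ordinal) ≤ omega0 ^ α := Order.one_le_iff_pos.2 (opow_pos _ omega0_pos)
    have h2 : (1 : Ordinal) ≤ ((m : ℕ) : Ordinal) := by exact_mod_cast m.one_le
    calc (1 : Ordinal) = 1 * 1 := (one_mul 1).symm
      _ ≤ omega0 ^ α * ((m : ℕ) : Ordinal) := mul_le_mul' h1 h2
  · rw [Ordinal.add_one_eq_succ, Ordinal.opow_succ]
    exact mul_le_mul' le_rfl (Ordinal.nat_lt_omega0 m).le

/-- The point `ω^α·m` of `X` (for `m ≥ 1`). -/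
def pt (α : Ordinal) (m : ℕ+) : Xsp α :=
  ⟨omega0 ^ α * ((m : ℕ) : Ordinal), omega_pow_mul_mem α m⟩

/-- `A_n = [ω^α·(n−1)+1, ω^α·n]`, as a subset of `X`. -/
def Ablock (α : Ordinal) (n : ℕ+) : Set (Xsp α) :=
  {x : Xsp α | (x : Ordinal) ∈
    Set.Icc (omega0 ^ α * (((n : ℕ) - 1 : ℕ) : Ordinal) + 1) (omega0 ^ α * ((n : ℕ) : Ordinal))}

/-- The defining property of the homomorphism `π : G → Sym({1,2,…})`:
`π(g)(m) = n` iff `g(ω^α·m) = ω^α·n`. -/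
def IsBlockPerm (α : Ordinal) (π : (Xsp α ≃ₜ Xsp α) → Equiv.Perm ℕ+) : Prop :=
  ∀ (g : Xsp α ≃ₜ Xsp α) (m : ℕ+), g (pt α m) = pt α (π g m)

/-- `P_i(g) = A_{π(g)(i)} \ g(A_i)`. -/
def Pset (α : Ordinal) (π : (Xsp α ≃ₜ Xsp α) → Equiv.Perm ℕ+)
    (g : Xsp α ≃ₜ Xsp α) (i : ℕ+) : Set (Xsp α) :=
  Ablock α (π g i) \ (⇑g '' Ablock α i)

/-- `Q_i(g) = A_i \ g⁻¹(A_{π(g)(i)})`. -/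
def Qset (α : Ordinal) (π : (Xsp α ≃ₜ Xsp α) → Equiv.Perm ℕ+)
    (g : Xsp α ≃ₜ Xsp α) (i : ℕ+) : Set (Xsp α) :=
  Ablock α i \ (⇑g ⁻¹' Ablock α (π g i))

/-- `(P₁, Q₁) ∼ (P₂, Q₂)` iff the topological disjoint union `P₁ ⊔ Q₂` is homeomorphic
to `P₂ ⊔ Q₁`. -/
def PairSim (P₁ Q₁ P₂ Q₂ : Type*) [TopologicalSpace P₁] [TopologicalSpace Q₁]
    [TopologicalSpace P₂] [TopologicalSpace Q₂] : Prop :=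
  Nonempty ((P₁ ⊕ Q₂) ≃ₜ (P₂ ⊕ Q₁))

/-- A subset `S` of `A_i` is bounded if it is contained in `[ω^α·(i−1)+1, x]`
for some `x < ω^α·i`. -/
def BoundedIn (α : Ordinal) (i : ℕ+) (S : Set (Xsp α)) : Prop :=
  ∃ x : Ordinal, x < omega0 ^ α * ((i : ℕ) : Ordinal) ∧
    ∀ y ∈ S, (y : Ordinal) ∈ Set.Icc (omega0 ^ α * (((i : ℕ) - 1 : ℕ) : Ordinal) + 1) x

/-!
Let a homeomorphism `h` carry `A \ B` onto `A' \ C`, where `A` and `A'` are clopen. Then `h(A)`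
and `A'` become equal once `h(B)` is removed from the first and `C` from the second. Hence
`A' \ h(A) ⊆ C` and `h(A) \ A' ⊆ h(B)`, while `h(B)` and `C` have the same trace `I` on `h(A) ∩ A'`.
Splitting along clopen sets gives `C ≃ I ⊔ (A' \ h(A))` and `B ≃ h(B) ≃ I ⊔ (h(A) \ A')`, where
`h(A) \ A' ≃ A \ h⁻¹(A')`, and a common summand `I` does not affect `∼`. The blocks `A_i` are clopen
because half-open intervals `(a, b]` of ordinals are.
-/

section SetDifferences

variable {E : Type*} {s t k : Set E}

lemma inter_eq_inter_of_sdiff_eq_sdiff {l : Set E} (hk : k ⊆ s) (hl : l ⊆ t)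
    (h : s \ k = t \ l) : l ∩ s = k ∩ t :=
  calc
    l ∩ s = (s ∩ t) \ (t \ l) := by grind
    _ = (s ∩ t) \ (s \ k) := by rw [h]
    _ = k ∩ t := by grind

lemma sdiff_eq_sdiff_of_sdiff_subset (hk : k ⊆ s) (h : s \ k ⊆ t) :
    k \ t = s \ t :=
  (Set.sdiff_subset_sdiff_left hk).antisymm fun _ hx =>
    ⟨Set.sdiff_subset_comm.1 h hx, hx.2⟩

end SetDifferences

section ClopenIntervals

variable {Y : Type*} [LinearOrder Y] [SuccOrder Y] [TopologicalSpace Y] [OrderClosedTopology Y]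

lemma isClopen_Iic (b : Y) : IsClopen (Set.Iic b) := by
  refine ⟨isClosed_Iic, ?_⟩
  by_cases hb : IsMax b
  · rw [hb.isTop.Iic_eq]
    exact isOpen_univ
  · rw [← Set.Iio_succ_eq_Iic_of_not_isMax hb]
    exact isOpen_Iio

lemma isClopen_Ioc (a b : Y) : IsClopen (Set.Ioc a b) := by
  rw [← Set.Iic_sdiff_Iic]
  exact IsClopen.diff (isClopen_Iic b) (isClopen_Iic a)

end ClopenIntervals

lemma isClopen_Ablock (α : Ordinal) (n : ℕ+) : IsClopen (Ablock α n) := by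
  simp only [Ablock, Set.Icc_add_one_left_eq_Ioc]
  exact (isClopen_Ioc _ _).preimage continuous_subtype_val

section PairSim

variable {P₁ Q₁ P₂ Q₂ : Type*} [TopologicalSpace P₁] [TopologicalSpace Q₁]
  [TopologicalSpace P₂] [TopologicalSpace Q₂]

lemma PairSim.of_common_summand {I : Type*} [TopologicalSpace I]
    (eP : I ⊕ P₁ ≃ₜ P₂) (eQ : I ⊕ Q₁ ≃ₜ Q₂) : PairSim P₁ Q₁ P₂ Q₂ :=
  ⟨((Homeomorph.refl P₁).sumCongr eQ.symm).trans <|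
    (Homeomorph.sumAssoc P₁ I Q₁).symm.trans <|
    ((Homeomorph.sumComm P₁ I).trans eP).sumCongr (Homeomorph.refl Q₁)⟩

lemma PairSim.congr_right {Q₁' Q₂' : Type*} [TopologicalSpace Q₁'] [TopologicalSpace Q₂']
    (H : PairSim P₁ Q₁ P₂ Q₂) (e₁ : Q₁ ≃ₜ Q₁') (e₂ : Q₂ ≃ₜ Q₂') : PairSim P₁ Q₁' P₂ Q₂' :=
  H.map fun e => ((Homeomorph.refl P₁).sumCongr e₂.symm).trans
    (e.trans ((Homeomorph.refl P₂).sumCongr e₁))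

end PairSim

section SplitAlongClopen

variable {X Y : Type*} [TopologicalSpace X] [TopologicalSpace Y]

lemma isOpenEmbedding_inclusion_inter (s : Set X) {u : Set X} (hu : IsOpen u) :
    IsOpenEmbedding (Set.inclusion (Set.inter_subset_left : s ∩ u ⊆ s)) := by
  refine .inclusion Set.inter_subset_left ?_
  rw [Subtype.preimage_coe_self_inter]
  exact hu.preimage continuous_subtype_val

open Classical in
/-- The decomposition of a subspace `s` into its parts inside and outside a clopen set `u`, as a
topological disjoint union. -/
def interSumDiffHomeomorph (s : Set X) {u : Set X} (hu : IsClopen u) :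
    ↥(s ∩ u) ⊕ ↥(s \ u) ≃ₜ ↥s :=
  let e : ↥(s ∩ u) ⊕ ↥(s \ u) ≃ ↥s :=
    ((Equiv.refl _).sumCongr (Equiv.setCongr Set.sdiff_self_inter.symm)).trans
      (Equiv.Set.sumDiffSubset Set.inter_subset_left)
  have inside : IsOpenEmbedding (e ∘ Sum.inl) := isOpenEmbedding_inclusion_inter s hu.isOpen
  have outside : IsOpenEmbedding (e ∘ Sum.inr) := isOpenEmbedding_inclusion_inter s hu.compl.isOpen
  e.toHomeomorphOfContinuousOpen
    (continuous_sum_dom.2 ⟨inside.continuous, outside.continuous⟩)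
    (isOpenMap_sum.2 ⟨inside.isOpenMap, outside.isOpenMap⟩)

lemma pairSim_of_sdiff_eq_sdiff {U V K L : Set X} (hU : IsClopen U) (hV : IsClopen V)
    (hK : K ⊆ U) (hL : L ⊆ V) (h : U \ K = V \ L) :
    PairSim ↥(V \ U) ↥(U \ V) ↥L ↥K := by
  have inter_eq : L ∩ U = K ∩ V := inter_eq_inter_of_sdiff_eq_sdiff hK hL h
  have L_diff : L \ U = V \ U := sdiff_eq_sdiff_of_sdiff_subset hL (h ▸ Set.sdiff_subset)
  have K_diff : K \ V = U \ V := sdiff_eq_sdiff_of_sdiff_subset hK (h ▸ Set.sdiff_subset)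
  have eL : ↥(K ∩ V) ⊕ ↥(V \ U) ≃ₜ ↥L := by
    rw [← inter_eq, ← L_diff]
    exact interSumDiffHomeomorph L hU
  have eK : ↥(K ∩ V) ⊕ ↥(U \ V) ≃ₜ ↥K := by
    rw [← K_diff]
    exact interSumDiffHomeomorph K hV
  exact .of_common_summand eL eK

theorem pair_sim_of_kernel_member_general (h : X ≃ₜ Y) {A B : Set X} {A' C : Set Y}
    (hA : IsClopen A) (hA' : IsClopen A') (hB : B ⊆ A) (hC : C ⊆ A')
    (hmaps : h '' (A \ B) = A' \ C) :
    PairSim ↥(A' \ h '' A) ↥(A \ h ⁻¹' A') ↥C ↥B := by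
  have himage : IsClopen (h '' A) := ⟨h.isClosed_image.2 hA.isClosed, h.isOpen_image.2 hA.isOpen⟩
  have hsdiff : h '' A \ h '' B = A' \ C := by rw [← Set.image_sdiff h.injective, hmaps]
  have himages : PairSim ↥(A' \ h '' A) ↥(h '' A \ A') ↥C ↥(h '' B) :=
    pairSim_of_sdiff_eq_sdiff himage hA' (Set.image_mono hB) hC hsdiff
  have eQ : ↥(h '' A \ A') ≃ₜ ↥(A \ h ⁻¹' A') :=
    (Homeomorph.setCongr (Set.image_sdiff_preimage ..).symm).trans (h.image _).symm
  exact himages.congr_right eQ (h.image B).symm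

end SplitAlongClopen

/-- Suppose `h` lies in the kernel `K*` of `π`, and `B`, `C` are bounded
clopen subsets of `A_i` such that `h` maps `A_i \ B` onto `A_i \ C`. Then
`(P_i(h), Q_i(h)) ∼ (C, B)`, where `P_i(h) = A_i \ h(A_i)` and `Q_i(h) = A_i \ h⁻¹(A_i)`. -/
theorem pair_sim_of_kernel_member (α : Ordinal) (hα : α.card ≤ Cardinal.aleph0)
    (π : (Xsp α ≃ₜ Xsp α) → Equiv.Perm ℕ+) (hπ : IsBlockPerm α π)
    (h : Xsp α ≃ₜ Xsp α) (hker : π h = 1) (i : ℕ+)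
    (B C : Set (Xsp α)) (hBsub : B ⊆ Ablock α i) (hCsub : C ⊆ Ablock α i)
    (hBclopen : IsClopen B) (hCclopen : IsClopen C)
    (hBbdd : BoundedIn α i B) (hCbdd : BoundedIn α i C)
    (hmaps : ⇑h '' (Ablock α i \ B) = Ablock α i \ C) :
    PairSim ↥(Ablock α i \ ⇑h '' Ablock α i) ↥(Ablock α i \ ⇑h ⁻¹' Ablock α i)
      ↥C ↥B :=
  pair_sim_of_kernel_member_general h (isClopen_Ablock α i) (isClopen_Ablock α i) hBsub hCsub hmaps
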